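/- Assume 0 < ε ≤ 1/15, the Local RIP holds, and ‖𝒜*(e)‖ ≤ εd_0/(10√2·sκ). Then for every (h,x) ∈ 𝒩_d ∩ 𝒩_μ ∩ 𝒩_ε, with δ = ‖ℋ(h,x) − X_0‖_F/d_0: (2/3)δ²d_0² − εδd_0²/(5√s·κ) + ‖e‖² ≤ F(h,x) ≤ (3/2)δ²d_0² + εδd_0²/(5√s·κ) + ‖e‖². -/

import Mathlib

noncomputable section
open Finset ComplexConjugate

namespace RGD

/-- Squared Euclidean norm of a complex vector. -/
def vnormSq {n : ℕ} (v : Fin n → ℂ) : ℝ := ∑ j, ‖v j‖ ^ 2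

/-- Euclidean norm of a complex vector. -/
def vnorm {n : ℕ} (v : Fin n → ℂ) : ℝ := Real.sqrt (vnormSq v)

/-- Inner product, conjugate-linear in the first argument. -/
def vinner {n : ℕ} (u v : Fin n → ℂ) : ℂ := ∑ j, conj (u j) * v j

/-- Squared Frobenius norm of a matrix. -/
def frobSq {K N : ℕ} (Z : Matrix (Fin K) (Fin N) ℂ) : ℝ := ∑ k, ∑ j, ‖Z k j‖ ^ 2

/-- Frobenius norm of a matrix. -/
def frob {K N : ℕ} (Z : Matrix (Fin K) (Fin N) ℂ) : ℝ := Real.sqrt (frobSq Z)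

/-- Frobenius inner product `⟨U,V⟩ = Tr(U*V)`, conjugate-linear in the first argument. -/
def finner {K N : ℕ} (U V : Matrix (Fin K) (Fin N) ℂ) : ℂ := ∑ k, ∑ j, conj (U k j) * V k j

/-- Spectral (operator) norm of a matrix: sup of `‖Zv‖` over the closed unit ball. -/
def opNorm {K N : ℕ} (Z : Matrix (Fin K) (Fin N) ℂ) : ℝ :=
  sSup {r : ℝ | ∃ v : Fin N → ℂ, vnorm v ≤ 1 ∧ r = vnorm (Z.mulVec v)}

/-- Squared Frobenius norm of a block-diagonal matrix, given by its diagonal blocks. -/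
def famFrobSq {K N s : ℕ} (Z : Fin s → Matrix (Fin K) (Fin N) ℂ) : ℝ := ∑ i, frobSq (Z i)

/-- Frobenius norm of a block-diagonal matrix, given by its diagonal blocks. -/
def famFrob {K N s : ℕ} (Z : Fin s → Matrix (Fin K) (Fin N) ℂ) : ℝ := Real.sqrt (famFrobSq Z)

/-- The rank-one matrix `u v*`. -/
def rankOne {K N : ℕ} (u : Fin K → ℂ) (v : Fin N → ℂ) : Matrix (Fin K) (Fin N) ℂ :=
  Matrix.of fun k j => u k * conj (v j)

/-- `ℋ(h,x)`: block-diagonal matrix with `i`-th block `hᵢ xᵢ*`. -/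
def Hmap {K N s : ℕ} (h : Fin s → Fin K → ℂ) (x : Fin s → Fin N → ℂ) :
    Fin s → Matrix (Fin K) (Fin N) ℂ := fun i => rankOne (h i) (x i)

/-- `𝒜ᵢ(Z) = (bₗ* Z aₗ)ₗ`. -/
def calAi {K N L : ℕ} (b : Fin L → Fin K → ℂ) (a : Fin L → Fin N → ℂ)
    (Z : Matrix (Fin K) (Fin N) ℂ) : Fin L → ℂ :=
  fun l => vinner (b l) (Z.mulVec (a l))

/-- `𝒜(Z) = Σᵢ 𝒜ᵢ(Zᵢ)` on block-diagonal matrices. -/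
def calA {K N L s : ℕ} (b : Fin L → Fin K → ℂ) (a : Fin s → Fin L → Fin N → ℂ)
    (Z : Fin s → Matrix (Fin K) (Fin N) ℂ) : Fin L → ℂ :=
  fun l => ∑ i, calAi b (a i) (Z i) l

/-- `𝒜ᵢ*(z) = Σₗ zₗ bₗ aₗ*`. -/
def calAdj {K N L : ℕ} (b : Fin L → Fin K → ℂ) (a : Fin L → Fin N → ℂ)
    (z : Fin L → ℂ) : Matrix (Fin K) (Fin N) ℂ :=
  Matrix.of fun k j => ∑ l, z l * b l k * conj (a l j)

/-- `‖𝒜*(e)‖ = maxᵢ ‖𝒜ᵢ*(e)‖` (operator norms). -/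
def AadjNorm {K N L s : ℕ} (b : Fin L → Fin K → ℂ) (a : Fin s → Fin L → Fin N → ℂ)
    (e : Fin L → ℂ) : ℝ :=
  ⨆ i : Fin s, opNorm (calAdj b (a i) e)

/-- `B*B = I_K`, expressed in terms of the columns `bₗ` of `B*`. -/
def BtBeqI {K L : ℕ} (b : Fin L → Fin K → ℂ) : Prop :=
  ∀ k k' : Fin K, (∑ l, b l k * conj (b l k')) = if k = k' then (1 : ℂ) else 0

/-- `μ ≥ μ_h`, i.e. `√L ‖B h_{i0}‖_∞ ≤ μ ‖h_{i0}‖` for all `i`. -/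
def muhLe {K L s : ℕ} (b : Fin L → Fin K → ℂ) (h0 : Fin s → Fin K → ℂ) (μ : ℝ) : Prop :=
  ∀ i l, Real.sqrt L * ‖vinner (b l) (h0 i)‖ ≤ μ * vnorm (h0 i)

/-- `d₀ = √(Σᵢ d_{i0}²)`. -/
def dtot {s : ℕ} (d0 : Fin s → ℝ) : ℝ := Real.sqrt (∑ i, d0 i ^ 2)

/-- Condition number `κ = (maxᵢ d_{i0}) / (minᵢ d_{i0})`. -/
def kappa {s : ℕ} (d0 : Fin s → ℝ) : ℝ := (⨆ i, d0 i) / (⨅ i, d0 i)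

/-- The observation `y = 𝒜(ℋ(h₀,x₀)) + e`. -/
def yvec {K N L s : ℕ} (b : Fin L → Fin K → ℂ) (a : Fin s → Fin L → Fin N → ℂ)
    (h0 : Fin s → Fin K → ℂ) (x0 : Fin s → Fin N → ℂ) (e : Fin L → ℂ) : Fin L → ℂ :=
  fun l => calA b a (Hmap h0 x0) l + e l

/-- `F(h,x) = ‖𝒜(ℋ(h,x)) − y‖²`. -/
def Fobj {K N L s : ℕ} (b : Fin L → Fin K → ℂ) (a : Fin s → Fin L → Fin N → ℂ)
    (h0 : Fin s → Fin K → ℂ) (x0 : Fin s → Fin N → ℂ) (e : Fin L → ℂ)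
    (h : Fin s → Fin K → ℂ) (x : Fin s → Fin N → ℂ) : ℝ :=
  vnormSq (fun l => calA b a (Hmap h x) l - yvec b a h0 x0 e l)

def G0 (z : ℝ) : ℝ := max (z - 1) 0 ^ 2

def G0' (z : ℝ) : ℝ := 2 * max (z - 1) 0

/-- The `i`-th regularizer `Gᵢ(hᵢ,xᵢ)` (including the factor `ρ`). -/
def Gi {K N L : ℕ} (b : Fin L → Fin K → ℂ) (ρ μ di : ℝ)
    (hi : Fin K → ℂ) (xi : Fin N → ℂ) : ℝ :=
  ρ * (G0 (vnormSq hi / (2 * di)) + G0 (vnormSq xi / (2 * di))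
    + ∑ l, G0 ((L : ℝ) * ‖vinner (b l) hi‖ ^ 2 / (8 * di * μ ^ 2)))

/-- The regularizer `G(h,x) = Σᵢ Gᵢ(hᵢ,xᵢ)`. -/
def Greg {K N L s : ℕ} (b : Fin L → Fin K → ℂ) (ρ μ : ℝ) (dd : Fin s → ℝ)
    (h : Fin s → Fin K → ℂ) (x : Fin s → Fin N → ℂ) : ℝ :=
  ∑ i, Gi b ρ μ (dd i) (h i) (x i)

/-- `F̃ = F + G`. -/
def Ftil {K N L s : ℕ} (b : Fin L → Fin K → ℂ) (a : Fin s → Fin L → Fin N → ℂ)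
    (h0 : Fin s → Fin K → ℂ) (x0 : Fin s → Fin N → ℂ) (e : Fin L → ℂ)
    (ρ μ : ℝ) (dd : Fin s → ℝ)
    (h : Fin s → Fin K → ℂ) (x : Fin s → Fin N → ℂ) : ℝ :=
  Fobj b a h0 x0 e h x + Greg b ρ μ dd h x

/-- The residual `𝒜(ℋ(h,x)) − y`. -/
def residual {K N L s : ℕ} (b : Fin L → Fin K → ℂ) (a : Fin s → Fin L → Fin N → ℂ)
    (h0 : Fin s → Fin K → ℂ) (x0 : Fin s → Fin N → ℂ) (e : Fin L → ℂ)
    (h : Fin s → Fin K → ℂ) (x : Fin s → Fin N → ℂ) : Fin L → ℂ :=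
  fun l => calA b a (Hmap h x) l - yvec b a h0 x0 e l

/-- Wirtinger gradient `∇F_{hᵢ} = 𝒜ᵢ*(𝒜(ℋ(h,x)) − y) xᵢ`. -/
def gradFh {K N L s : ℕ} (b : Fin L → Fin K → ℂ) (a : Fin s → Fin L → Fin N → ℂ)
    (h0 : Fin s → Fin K → ℂ) (x0 : Fin s → Fin N → ℂ) (e : Fin L → ℂ)
    (h : Fin s → Fin K → ℂ) (x : Fin s → Fin N → ℂ) (i : Fin s) : Fin K → ℂ :=
  (calAdj b (a i) (residual b a h0 x0 e h x)).mulVec (x i)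

/-- Wirtinger gradient `∇F_{xᵢ} = (𝒜ᵢ*(𝒜(ℋ(h,x)) − y))* hᵢ`. -/
def gradFx {K N L s : ℕ} (b : Fin L → Fin K → ℂ) (a : Fin s → Fin L → Fin N → ℂ)
    (h0 : Fin s → Fin K → ℂ) (x0 : Fin s → Fin N → ℂ) (e : Fin L → ℂ)
    (h : Fin s → Fin K → ℂ) (x : Fin s → Fin N → ℂ) (i : Fin s) : Fin N → ℂ :=
  (calAdj b (a i) (residual b a h0 x0 e h x)).conjTranspose.mulVec (h i)

/-- Wirtinger gradient `∇G_{hᵢ}`. -/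
def gradGh {K L s : ℕ} (b : Fin L → Fin K → ℂ) (ρ μ : ℝ) (dd : Fin s → ℝ)
    (h : Fin s → Fin K → ℂ) (i : Fin s) : Fin K → ℂ :=
  fun k => ((ρ / (2 * dd i) : ℝ) : ℂ) *
    (((G0' (vnormSq (h i) / (2 * dd i)) : ℝ) : ℂ) * h i k
      + (((L : ℝ) / (4 * μ ^ 2) : ℝ) : ℂ) *
        ∑ l, ((G0' ((L : ℝ) * ‖vinner (b l) (h i)‖ ^ 2 / (8 * dd i * μ ^ 2)) : ℝ) : ℂ)
          * (vinner (b l) (h i) * b l k))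

/-- Wirtinger gradient `∇G_{xᵢ}`. -/
def gradGx {N s : ℕ} (ρ : ℝ) (dd : Fin s → ℝ)
    (x : Fin s → Fin N → ℂ) (i : Fin s) : Fin N → ℂ :=
  fun j => ((ρ / (2 * dd i) : ℝ) : ℂ) * (((G0' (vnormSq (x i) / (2 * dd i)) : ℝ) : ℂ) * x i j)

/-- `∇F̃_{hᵢ} = ∇F_{hᵢ} + ∇G_{hᵢ}`. -/
def gradH {K N L s : ℕ} (b : Fin L → Fin K → ℂ) (a : Fin s → Fin L → Fin N → ℂ)
    (h0 : Fin s → Fin K → ℂ) (x0 : Fin s → Fin N → ℂ) (e : Fin L → ℂ)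
    (ρ μ : ℝ) (dd : Fin s → ℝ)
    (h : Fin s → Fin K → ℂ) (x : Fin s → Fin N → ℂ) (i : Fin s) : Fin K → ℂ :=
  fun k => gradFh b a h0 x0 e h x i k + gradGh b ρ μ dd h i k

/-- `∇F̃_{xᵢ} = ∇F_{xᵢ} + ∇G_{xᵢ}`. -/
def gradX {K N L s : ℕ} (b : Fin L → Fin K → ℂ) (a : Fin s → Fin L → Fin N → ℂ)
    (h0 : Fin s → Fin K → ℂ) (x0 : Fin s → Fin N → ℂ) (e : Fin L → ℂ)
    (ρ μ : ℝ) (dd : Fin s → ℝ)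
    (h : Fin s → Fin K → ℂ) (x : Fin s → Fin N → ℂ) (i : Fin s) : Fin N → ℂ :=
  fun j => gradFx b a h0 x0 e h x i j + gradGx ρ dd x i j

/-- `‖∇F̃(h,x)‖²` (squared norm of the stacked Wirtinger gradient). -/
def gradNormSq {K N L s : ℕ} (b : Fin L → Fin K → ℂ) (a : Fin s → Fin L → Fin N → ℂ)
    (h0 : Fin s → Fin K → ℂ) (x0 : Fin s → Fin N → ℂ) (e : Fin L → ℂ)
    (ρ μ : ℝ) (dd : Fin s → ℝ)
    (h : Fin s → Fin K → ℂ) (x : Fin s → Fin N → ℂ) : ℝ :=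
  ∑ i, vnormSq (gradH b a h0 x0 e ρ μ dd h x i) + ∑ i, vnormSq (gradX b a h0 x0 e ρ μ dd h x i)

/-- `‖∇F̃(h',x') − ∇F̃(h,x)‖²`. -/
def gradDiffNormSq {K N L s : ℕ} (b : Fin L → Fin K → ℂ) (a : Fin s → Fin L → Fin N → ℂ)
    (h0 : Fin s → Fin K → ℂ) (x0 : Fin s → Fin N → ℂ) (e : Fin L → ℂ)
    (ρ μ : ℝ) (dd : Fin s → ℝ)
    (h : Fin s → Fin K → ℂ) (x : Fin s → Fin N → ℂ)
    (h' : Fin s → Fin K → ℂ) (x' : Fin s → Fin N → ℂ) : ℝ :=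
  ∑ i, vnormSq (fun k => gradH b a h0 x0 e ρ μ dd h' x' i k - gradH b a h0 x0 e ρ μ dd h x i k)
  + ∑ i, vnormSq (fun j => gradX b a h0 x0 e ρ μ dd h' x' i j - gradX b a h0 x0 e ρ μ dd h x i j)

/-- Membership in `𝒩_d`. -/
def inNd {K N s : ℕ} (d0 : Fin s → ℝ)
    (h : Fin s → Fin K → ℂ) (x : Fin s → Fin N → ℂ) : Prop :=
  ∀ i, vnorm (h i) ≤ 2 * Real.sqrt (d0 i) ∧ vnorm (x i) ≤ 2 * Real.sqrt (d0 i)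

/-- Membership in `𝒩_μ`. -/
def inNmu {K L s : ℕ} (b : Fin L → Fin K → ℂ) (d0 : Fin s → ℝ) (μ : ℝ)
    (h : Fin s → Fin K → ℂ) : Prop :=
  ∀ i, ∀ l, Real.sqrt L * ‖vinner (b l) (h i)‖ ≤ 4 * Real.sqrt (d0 i) * μ

/-- `δᵢ(hᵢ,xᵢ) = ‖hᵢxᵢ* − h_{i0}x_{i0}*‖_F / d_{i0}`. -/
def deltaI {K N : ℕ} (h0i : Fin K → ℂ) (x0i : Fin N → ℂ) (d0i : ℝ)
    (hi : Fin K → ℂ) (xi : Fin N → ℂ) : ℝ :=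
  frob (rankOne hi xi - rankOne h0i x0i) / d0i

/-- Membership in `𝒩_ε`. -/
def inNeps {K N s : ℕ} (h0 : Fin s → Fin K → ℂ) (x0 : Fin s → Fin N → ℂ)
    (d0 : Fin s → ℝ) (ε : ℝ)
    (h : Fin s → Fin K → ℂ) (x : Fin s → Fin N → ℂ) : Prop :=
  ∀ i, deltaI (h0 i) (x0 i) (d0 i) (h i) (x i) ≤ ε

/-- The global relative error `δ(h,x) = ‖ℋ(h,x) − X₀‖_F / d₀`. -/
def deltaTot {K N s : ℕ} (h0 : Fin s → Fin K → ℂ) (x0 : Fin s → Fin N → ℂ)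
    (d0 : Fin s → ℝ)
    (h : Fin s → Fin K → ℂ) (x : Fin s → Fin N → ℂ) : ℝ :=
  famFrob (fun i => Hmap h x i - Hmap h0 x0 i) / dtot d0

/-- Membership in `𝒩_F̃`. -/
def inNF {K N L s : ℕ} (b : Fin L → Fin K → ℂ) (a : Fin s → Fin L → Fin N → ℂ)
    (h0 : Fin s → Fin K → ℂ) (x0 : Fin s → Fin N → ℂ) (e : Fin L → ℂ)
    (d0 : Fin s → ℝ) (ρ μ : ℝ) (dd : Fin s → ℝ) (ε : ℝ)
    (h : Fin s → Fin K → ℂ) (x : Fin s → Fin N → ℂ) : Prop :=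
  Ftil b a h0 x0 e ρ μ dd h x ≤ ε ^ 2 * dtot d0 ^ 2 / (3 * (s : ℝ) * kappa d0 ^ 2) + vnormSq e

/-- The Local Restricted Isometry Property on `𝒩_d ∩ 𝒩_μ ∩ 𝒩_ε`. -/
def LocalRIP {K N L s : ℕ} (b : Fin L → Fin K → ℂ) (a : Fin s → Fin L → Fin N → ℂ)
    (h0 : Fin s → Fin K → ℂ) (x0 : Fin s → Fin N → ℂ)
    (d0 : Fin s → ℝ) (μ ε : ℝ) : Prop :=
  ∀ (h : Fin s → Fin K → ℂ) (x : Fin s → Fin N → ℂ),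
    inNd d0 h x → inNmu b d0 μ h → inNeps h0 x0 d0 ε h x →
      (2 / 3) * famFrobSq (fun i => Hmap h x i - Hmap h0 x0 i)
          ≤ vnormSq (calA b a fun i => Hmap h x i - Hmap h0 x0 i)
      ∧ vnormSq (calA b a fun i => Hmap h x i - Hmap h0 x0 i)
          ≤ (3 / 2) * famFrobSq (fun i => Hmap h x i - Hmap h0 x0 i)

/-- `α_{i1} = ⟨h_{i0}, hᵢ⟩ / d_{i0}`. -/
def alpha1 {K s : ℕ} (h0 : Fin s → Fin K → ℂ) (d0 : Fin s → ℝ)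
    (h : Fin s → Fin K → ℂ) (i : Fin s) : ℂ :=
  vinner (h0 i) (h i) / ((d0 i : ℝ) : ℂ)

/-- `α_{i2} = ⟨x_{i0}, xᵢ⟩ / d_{i0}`. -/
def alpha2 {N s : ℕ} (x0 : Fin s → Fin N → ℂ) (d0 : Fin s → ℝ)
    (x : Fin s → Fin N → ℂ) (i : Fin s) : ℂ :=
  vinner (x0 i) (x i) / ((d0 i : ℝ) : ℂ)

/-- `δ₀ = δ/10`. -/
def delta0 {K N s : ℕ} (h0 : Fin s → Fin K → ℂ) (x0 : Fin s → Fin N → ℂ)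
    (d0 : Fin s → ℝ) (h : Fin s → Fin K → ℂ) (x : Fin s → Fin N → ℂ) : ℝ :=
  deltaTot h0 x0 d0 h x / 10

/-- `αᵢ = (1−δ₀)α_{i1}` if `‖hᵢ‖ ≥ ‖xᵢ‖`, else `1/((1−δ₀) conj(α_{i2}))`. -/
def alphaC {K N s : ℕ} (h0 : Fin s → Fin K → ℂ) (x0 : Fin s → Fin N → ℂ)
    (d0 : Fin s → ℝ) (h : Fin s → Fin K → ℂ) (x : Fin s → Fin N → ℂ) (i : Fin s) : ℂ :=
  if vnorm (x i) ≤ vnorm (h i)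
  then ((1 - delta0 h0 x0 d0 h x : ℝ) : ℂ) * alpha1 h0 d0 h i
  else 1 / (((1 - delta0 h0 x0 d0 h x : ℝ) : ℂ) * conj (alpha2 x0 d0 x i))

/-- `Δhᵢ = hᵢ − αᵢ h_{i0}`. -/
def dh {K N s : ℕ} (h0 : Fin s → Fin K → ℂ) (x0 : Fin s → Fin N → ℂ)
    (d0 : Fin s → ℝ) (h : Fin s → Fin K → ℂ) (x : Fin s → Fin N → ℂ) (i : Fin s) :
    Fin K → ℂ :=
  fun k => h i k - alphaC h0 x0 d0 h x i * h0 i k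

/-- `Δxᵢ = xᵢ − conj(αᵢ)⁻¹ x_{i0}`. -/
def dx {K N s : ℕ} (h0 : Fin s → Fin K → ℂ) (x0 : Fin s → Fin N → ℂ)
    (d0 : Fin s → ℝ) (h : Fin s → Fin K → ℂ) (x : Fin s → Fin N → ℂ) (i : Fin s) :
    Fin N → ℂ :=
  fun j => x i j - (conj (alphaC h0 x0 d0 h x i))⁻¹ * x0 i j

/-- `σ²_max(h,x) = maxₗ Σᵢ |bₗ*hᵢ|² ‖xᵢ‖²`. -/
def sigmaMaxSq {K N L s : ℕ} (b : Fin L → Fin K → ℂ)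
    (h : Fin s → Fin K → ℂ) (x : Fin s → Fin N → ℂ) : ℝ :=
  ⨆ l : Fin L, ∑ i, ‖vinner (b l) (h i)‖ ^ 2 * vnormSq (x i)

/-- The rank-one bound (Lemma: `𝒜` on block-diagonal matrices with rank-1 blocks). -/
def RankOneBound {K N L s : ℕ} (b : Fin L → Fin K → ℂ)
    (a : Fin s → Fin L → Fin N → ℂ) : Prop :=
  ∀ (h : Fin s → Fin K → ℂ) (x : Fin s → Fin N → ℂ),
    vnormSq (calA b a (Hmap h x)) ≤
      4 / 3 * famFrobSq (Hmap h x)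
      + 2 * Real.sqrt (2 * (s : ℝ) * famFrobSq (Hmap h x) * sigmaMaxSq b h x
          * ((K : ℝ) + N) * Real.log L)
      + 8 * (s : ℝ) * sigmaMaxSq b h x * ((K : ℝ) + N) * Real.log L

/-- The subspace `Tᵢ = {h_{i0} v* + u x_{i0}*}`. -/
def Tspace {K N : ℕ} (h0i : Fin K → ℂ) (x0i : Fin N → ℂ) :
    Set (Matrix (Fin K) (Fin N) ℂ) :=
  {Z | ∃ (u : Fin K → ℂ) (v : Fin N → ℂ), Z = rankOne h0i v + rankOne u x0i}

/-- `P` is the orthogonal projection onto `Tᵢ` w.r.t. the Frobenius inner product. -/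
def IsFrobProj {K N : ℕ} (h0i : Fin K → ℂ) (x0i : Fin N → ℂ)
    (P : Matrix (Fin K) (Fin N) ℂ → Matrix (Fin K) (Fin N) ℂ) : Prop :=
  ∀ Z, P Z ∈ Tspace h0i x0i ∧ ∀ W ∈ Tspace h0i x0i, finner W (Z - P Z) = 0

/-- Operator norm of `𝒜ᵢ` from `(ℂ^{K×N}, ‖·‖_F)` to `(ℂ^L, ‖·‖)`. -/
def calAiOpNorm {K N L : ℕ} (b : Fin L → Fin K → ℂ) (a : Fin L → Fin N → ℂ) : ℝ :=
  sSup {r : ℝ | ∃ Z : Matrix (Fin K) (Fin N) ℂ, frob Z ≤ 1 ∧ r = vnorm (calAi b a Z)}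

/-- Operator norm of `𝒜` from block-diagonal matrices with `‖·‖_F` to `ℂ^L`. -/
def calAOpNorm {K N L s : ℕ} (b : Fin L → Fin K → ℂ)
    (a : Fin s → Fin L → Fin N → ℂ) : ℝ :=
  sSup {r : ℝ | ∃ Z : Fin s → Matrix (Fin K) (Fin N) ℂ, famFrob Z ≤ 1 ∧ r = vnorm (calA b a Z)}

/-- Norm of a stacked vector in `ℂ^{ns}`. -/
def stackNorm {n s : ℕ} (u : Fin s → Fin n → ℂ) : ℝ := Real.sqrt (∑ i, vnormSq (u i))

/-- Norm of a point `z = (h,x) ∈ ℂ^{s(K+N)}`. -/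
def pairNorm {K N s : ℕ} (u : Fin s → Fin K → ℂ) (v : Fin s → Fin N → ℂ) : ℝ :=
  Real.sqrt (∑ i, vnormSq (u i) + ∑ i, vnormSq (v i))

/-- `z + t • w` componentwise, `t` real. -/
def shiftV {n s : ℕ} (u w : Fin s → Fin n → ℂ) (t : ℝ) : Fin s → Fin n → ℂ :=
  fun i k => u i k + (t : ℂ) * w i k

/-- `σ_max(h) = maxₗ √(Σᵢ |bₗ*hᵢ|²)` (unit `xᵢ`'s). -/
def sigmaMaxU {K L s : ℕ} (b : Fin L → Fin K → ℂ) (h : Fin s → Fin K → ℂ) : ℝ :=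
  ⨆ l, Real.sqrt (∑ i, ‖vinner (b l) (h i)‖ ^ 2)

/-!
Write `E = ℋ(h,x) − X₀`. Expanding the square gives `F = ‖𝒜(E)‖² − 2 Re⟨𝒜(E), e⟩ + ‖e‖²`, where
the restricted isometry property controls the first term and `⟨𝒜(E), e⟩ = Σᵢ ⟨Eᵢ, 𝒜ᵢ*(e)⟩`.
Projecting `M` orthogonally onto the range of `Z` shows `|⟨Z, M⟩| ≤ √(rank Z) ‖Z‖_F ‖M‖`. Each
block of `E` is a difference of two rank-one matrices, so the ranks of the `s` blocks add up to
at most `2s`, and Cauchy–Schwarz over the blocks yields `|⟨𝒜(E), e⟩| ≤ √(2s) ‖E‖_F ‖𝒜*(e)‖`.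
-/

open scoped InnerProductSpace

section

variable {𝕜 E F ι : Type*} [RCLike 𝕜] [NormedAddCommGroup E] [InnerProductSpace 𝕜 E]
  [NormedAddCommGroup F] [InnerProductSpace 𝕜 F] [CompleteSpace E] [CompleteSpace F]
  [Fintype ι] {v : ι → F}

lemma sum_norm_inner_map_sq_le (hv : Orthonormal 𝕜 v) (S : F →L[𝕜] E) (u : E) :
    ∑ i, ‖⟪u, S (v i)⟫_𝕜‖ ^ 2 ≤ ‖S‖ ^ 2 * ‖u‖ ^ 2 := calc
  ∑ i, ‖⟪u, S (v i)⟫_𝕜‖ ^ 2 = ∑ i, ‖⟪v i, S.adjoint u⟫_𝕜‖ ^ 2 := by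
    simp_rw [S.adjoint_inner_right, norm_inner_symm u]
  _ ≤ ‖S.adjoint u‖ ^ 2 := hv.sum_inner_products_le _
  _ ≤ ‖S‖ ^ 2 * ‖u‖ ^ 2 := by
    rw [← mul_pow, ← ContinuousLinearMap.adjoint.norm_map S]
    gcongr
    exact S.adjoint.le_opNorm u

lemma sum_norm_orthogonalProjectionOnto_map_sq_le (hv : Orthonormal 𝕜 v) (S : F →L[𝕜] E)
    (U : Submodule 𝕜 E) [FiniteDimensional 𝕜 U] :
    ∑ i, ‖U.orthogonalProjectionOnto (S (v i))‖ ^ 2 ≤ Module.finrank 𝕜 U * ‖S‖ ^ 2 := by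
  set u := stdOrthonormalBasis 𝕜 U
  calc ∑ i, ‖U.orthogonalProjectionOnto (S (v i))‖ ^ 2
      = ∑ j, ∑ i, ‖⟪(u j : E), S (v i)⟫_𝕜‖ ^ 2 := by
        rw [Finset.sum_comm]
        simp only [← Submodule.inner_orthogonalProjectionOnto_eq_of_mem_left,
          u.sum_sq_norm_inner_right]
    _ ≤ ∑ j, ‖S‖ ^ 2 * ‖(u j : E)‖ ^ 2 :=
        Finset.sum_le_sum fun j _ => sum_norm_inner_map_sq_le hv S (u j)
    _ = Module.finrank 𝕜 U * ‖S‖ ^ 2 := by simp [Submodule.norm_coe, u.norm_eq_one]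

lemma norm_sum_inner_map_le_sqrt_finrank_mul (hv : Orthonormal 𝕜 v) (S : F →L[𝕜] E)
    (U : Submodule 𝕜 E) [FiniteDimensional 𝕜 U] (t : ι → U) :
    ‖∑ i, ⟪(t i : E), S (v i)⟫_𝕜‖ ≤ √(Module.finrank 𝕜 U) * √(∑ i, ‖t i‖ ^ 2) * ‖S‖ := by
  calc ‖∑ i, ⟪(t i : E), S (v i)⟫_𝕜‖
      ≤ ∑ i, ‖t i‖ * ‖U.orthogonalProjectionOnto (S (v i))‖ := by
        refine norm_sum_le_of_le _ fun i _ => ?_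
        rw [← Submodule.inner_orthogonalProjectionOnto_eq_of_mem_left]
        exact norm_inner_le_norm _ _
    _ ≤ √(∑ i, ‖t i‖ ^ 2) * √(∑ i, ‖U.orthogonalProjectionOnto (S (v i))‖ ^ 2) :=
        Real.sum_mul_le_sqrt_mul_sqrt _ _ _
    _ ≤ √(∑ i, ‖t i‖ ^ 2) * √(Module.finrank 𝕜 U * ‖S‖ ^ 2) := by
        gcongr
        exact sum_norm_orthogonalProjectionOnto_map_sq_le hv S U
    _ = √(Module.finrank 𝕜 U) * √(∑ i, ‖t i‖ ^ 2) * ‖S‖ := by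
        rw [Real.sqrt_mul (Nat.cast_nonneg _), Real.sqrt_sq (norm_nonneg S)]
        ring

end

lemma rank_sub_le {m n R : Type*} [Fintype n] [Field R] (A B : Matrix m n R) :
    (A - B).rank ≤ A.rank + B.rank := by
  have hle : LinearMap.range (A - B).mulVecLin ≤
      LinearMap.range A.mulVecLin ⊔ LinearMap.range B.mulVecLin := by
    rintro _ ⟨v, rfl⟩
    rw [Matrix.mulVecLin_apply, Matrix.sub_mulVec]
    exact Submodule.sub_mem_sup ⟨v, rfl⟩ ⟨v, rfl⟩
  exact (Submodule.finrank_mono hle).trans (Submodule.finrank_add_le_finrank_add_finrank _ _)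

lemma frobSq_nonneg {K N : ℕ} (Z : Matrix (Fin K) (Fin N) ℂ) : 0 ≤ frobSq Z :=
  Finset.sum_nonneg fun _ _ => Finset.sum_nonneg fun _ _ => sq_nonneg _

lemma famFrob_nonneg {K N s : ℕ} (Z : Fin s → Matrix (Fin K) (Fin N) ℂ) : 0 ≤ famFrob Z :=
  Real.sqrt_nonneg _

lemma famFrob_sq {K N s : ℕ} (Z : Fin s → Matrix (Fin K) (Fin N) ℂ) :
    famFrob Z ^ 2 = famFrobSq Z :=
  Real.sq_sqrt (Finset.sum_nonneg fun i _ => frobSq_nonneg (Z i))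

lemma vnorm_eq_norm {n : ℕ} (v : Fin n → ℂ) : vnorm v = ‖WithLp.toLp 2 v‖ := by
  simp [EuclideanSpace.norm_eq, vnorm, vnormSq]

lemma vnormSq_eq_norm_sq {n : ℕ} (v : Fin n → ℂ) : vnormSq v = ‖WithLp.toLp 2 v‖ ^ 2 := by
  simp [EuclideanSpace.norm_sq_eq, vnormSq]

lemma vinner_eq_inner {n : ℕ} (u v : Fin n → ℂ) :
    vinner u v = ⟪WithLp.toLp 2 u, WithLp.toLp 2 v⟫_ℂ := by
  simp [vinner, PiLp.inner_apply, mul_comm]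

lemma vnormSq_sub {n : ℕ} (u v : Fin n → ℂ) :
    vnormSq (u - v) = vnormSq u - 2 * (vinner u v).re + vnormSq v := by
  simp only [vnormSq_eq_norm_sq, vinner_eq_inner, WithLp.toLp_sub]
  exact norm_sub_sq (𝕜 := ℂ) _ _

lemma vinner_sub_right {n : ℕ} (u v w : Fin n → ℂ) :
    vinner u (v - w) = vinner u v - vinner u w := by
  simp [vinner, mul_sub]

lemma toEuclideanLin_basisFun {𝕜 m n : Type*} [RCLike 𝕜] [Fintype n] [DecidableEq n]
    (Z : Matrix m n 𝕜) (j : n) :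
    Matrix.toEuclideanLin Z (EuclideanSpace.basisFun n 𝕜 j) = WithLp.toLp 2 (Z.col j) := by
  rw [EuclideanSpace.basisFun_apply, Matrix.toLpLin_apply, PiLp.ofLp_single,
    Matrix.mulVec_single_one]

lemma finrank_range_toEuclideanLin {𝕜 m n : Type*} [RCLike 𝕜] [Finite m] [Fintype n]
    [DecidableEq n] (Z : Matrix m n 𝕜) :
    Module.finrank 𝕜 (LinearMap.range (Matrix.toEuclideanLin Z)) = Z.rank := by
  have := Fintype.ofFinite m
  rw [Matrix.toEuclideanLin_eq_toLin_orthonormal, ← Matrix.rank_eq_finrank_range_toLin]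

lemma opNorm_eq_norm {K N : ℕ} (Z : Matrix (Fin K) (Fin N) ℂ) :
    opNorm Z = ‖(Matrix.toEuclideanLin Z).toContinuousLinearMap‖ := by
  rw [← ContinuousLinearMap.sSup_unitClosedBall_eq_norm, opNorm]
  congr 1
  ext r
  simp only [vnorm_eq_norm, Set.mem_image, mem_closedBall_zero_iff, Set.mem_ofPred_eq,
    (WithLp.toLp_surjective 2).exists, LinearMap.coe_toContinuousLinearMap',
    Matrix.toLpLin_toLp, Matrix.toLin'_apply, eq_comm (a := r)]

lemma norm_finner_le_sqrt_rank_mul_frob_mul_opNorm {K N : ℕ} (Z M : Matrix (Fin K) (Fin N) ℂ) :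
    ‖finner Z M‖ ≤ √Z.rank * frob Z * opNorm M := by
  let e := EuclideanSpace.basisFun (Fin N) ℂ
  let T := Matrix.toEuclideanLin Z
  let S := (Matrix.toEuclideanLin M).toContinuousLinearMap
  have hinner : finner Z M = ∑ j, ⟪T (e j), S (e j)⟫_ℂ := by
    simp only [T, S, e, LinearMap.coe_toContinuousLinearMap', toEuclideanLin_basisFun,
      ← vinner_eq_inner]
    exact Finset.sum_comm
  have hfrob : frob Z = √(∑ j, ‖T.rangeRestrict (e j)‖ ^ 2) := by
    simp only [T, e, Submodule.coe_norm, LinearMap.codRestrict_apply, toEuclideanLin_basisFun,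
      ← vnormSq_eq_norm_sq]
    exact congrArg Real.sqrt Finset.sum_comm
  rw [hinner, hfrob, opNorm_eq_norm, ← finrank_range_toEuclideanLin]
  exact norm_sum_inner_map_le_sqrt_finrank_mul e.orthonormal S _ fun j => T.rangeRestrict (e j)

lemma rank_rankOne_le {K N : ℕ} (u : Fin K → ℂ) (v : Fin N → ℂ) : (rankOne u v).rank ≤ 1 :=
  Matrix.rank_vecMulVec_le u fun j => conj (v j)

lemma rank_rankOne_sub_rankOne_le {K N : ℕ} (u p : Fin K → ℂ) (v q : Fin N → ℂ) :
    (rankOne u v - rankOne p q).rank ≤ 2 :=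
  (rank_sub_le _ _).trans (add_le_add (rank_rankOne_le u v) (rank_rankOne_le p q))

section

variable {K N L s : ℕ} (b : Fin L → Fin K → ℂ)

lemma vinner_calAi (a : Fin L → Fin N → ℂ) (Z : Matrix (Fin K) (Fin N) ℂ) (e : Fin L → ℂ) :
    vinner (calAi b a Z) e = finner Z (calAdj b a e) := by
  simp only [vinner, calAi, finner, calAdj, Matrix.mulVec, dotProduct, Matrix.of_apply, map_sum,
    map_mul, Complex.conj_conj, Finset.mul_sum, Finset.sum_mul]
  rw [Finset.sum_comm]
  refine Finset.sum_congr rfl fun k _ => ?_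
  rw [Finset.sum_comm]
  exact Finset.sum_congr rfl fun _ _ => Finset.sum_congr rfl fun _ _ => by ring

variable (a : Fin s → Fin L → Fin N → ℂ)

lemma vinner_calA (Z : Fin s → Matrix (Fin K) (Fin N) ℂ) (e : Fin L → ℂ) :
    vinner (calA b a Z) e = ∑ i, finner (Z i) (calAdj b (a i) e) := by
  simp only [← vinner_calAi, vinner, calA, map_sum, Finset.sum_mul]
  exact Finset.sum_comm

lemma calA_sub (Z W : Fin s → Matrix (Fin K) (Fin N) ℂ) :
    (calA b a fun i => Z i - W i) = calA b a Z - calA b a W := by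
  ext l
  simp [calA, calAi, Matrix.sub_mulVec, vinner_sub_right]

lemma opNorm_calAdj_le_AadjNorm (e : Fin L → ℂ) (i : Fin s) :
    opNorm (calAdj b (a i) e) ≤ AadjNorm b a e :=
  le_ciSup (f := fun i => opNorm (calAdj b (a i) e)) (Set.finite_range _).bddAbove i

lemma AadjNorm_nonneg (e : Fin L → ℂ) : 0 ≤ AadjNorm b a e :=
  Real.iSup_nonneg fun i => by rw [opNorm_eq_norm]; exact norm_nonneg _

lemma norm_vinner_calA_le_sqrt_sum_rank_mul (Z : Fin s → Matrix (Fin K) (Fin N) ℂ)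
    (e : Fin L → ℂ) :
    ‖vinner (calA b a Z) e‖ ≤ √(∑ i, ((Z i).rank : ℝ)) * famFrob Z * AadjNorm b a e := by
  rw [vinner_calA]
  calc ‖∑ i, finner (Z i) (calAdj b (a i) e)‖
      ≤ ∑ i, √(Z i).rank * frob (Z i) * AadjNorm b a e :=
        norm_sum_le_of_le _ fun i _ =>
          (norm_finner_le_sqrt_rank_mul_frob_mul_opNorm _ _).trans <|
          mul_le_mul_of_nonneg_left (opNorm_calAdj_le_AadjNorm b a e i) <|
            mul_nonneg (Real.sqrt_nonneg _) (Real.sqrt_nonneg _)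
    _ = (∑ i, √(Z i).rank * frob (Z i)) * AadjNorm b a e := (Finset.sum_mul ..).symm
    _ ≤ √(∑ i, ((Z i).rank : ℝ)) * famFrob Z * AadjNorm b a e :=
        mul_le_mul_of_nonneg_right
          (Real.sum_sqrt_mul_sqrt_le _ (fun _ => Nat.cast_nonneg _) fun i => frobSq_nonneg (Z i))
          (AadjNorm_nonneg b a e)

variable (h0 h : Fin s → Fin K → ℂ) (x0 x : Fin s → Fin N → ℂ) (e : Fin L → ℂ)

lemma Fobj_eq :
    Fobj b a h0 x0 e h x = vnormSq (calA b a fun i => Hmap h x i - Hmap h0 x0 i)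
      - 2 * (vinner (calA b a fun i => Hmap h x i - Hmap h0 x0 i) e).re + vnormSq e := by
  rw [← vnormSq_sub, calA_sub]
  exact congrArg vnormSq (funext fun _ => sub_add_eq_sub_sub _ _ _)

lemma norm_vinner_calA_Hmap_sub_le :
    ‖vinner (calA b a fun i => Hmap h x i - Hmap h0 x0 i) e‖
      ≤ √(2 * s) * famFrob (fun i => Hmap h x i - Hmap h0 x0 i) * AadjNorm b a e := by
  have hrank : ∑ i, ((Hmap h x i - Hmap h0 x0 i).rank : ℝ) ≤ 2 * s := calc
    _ ≤ ∑ _i : Fin s, (2 : ℝ) := Finset.sum_le_sum fun i _ => by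
      exact_mod_cast rank_rankOne_sub_rankOne_le (h i) (h0 i) (x i) (x0 i)
    _ = 2 * s := by simp [mul_comm]
  refine (norm_vinner_calA_le_sqrt_sum_rank_mul b a _ e).trans <|
    mul_le_mul_of_nonneg_right ?_ (AadjNorm_nonneg b a e)
  exact mul_le_mul_of_nonneg_right (Real.sqrt_le_sqrt hrank) (Real.sqrt_nonneg _)

lemma abs_Fobj_sub_le :
    |Fobj b a h0 x0 e h x
        - (vnormSq (calA b a fun i => Hmap h x i - Hmap h0 x0 i) + vnormSq e)|
      ≤ 2 * (√(2 * s) * famFrob (fun i => Hmap h x i - Hmap h0 x0 i) * AadjNorm b a e) := by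
  set z := vinner (calA b a fun i => Hmap h x i - Hmap h0 x0 i) e with hz
  calc _ = |-(2 * z.re)| := by
        rw [Fobj_eq, ← hz]
        ring_nf
    _ = 2 * |z.re| := by rw [abs_neg, abs_mul, abs_two]
    _ ≤ _ := by
        gcongr
        exact (Complex.abs_re_le_norm z).trans (norm_vinner_calA_Hmap_sub_le ..)

end

lemma dtot_pos {s : ℕ} (hs : 0 < s) {d0 : Fin s → ℝ} (hd0 : ∀ i, 0 < d0 i) : 0 < dtot d0 :=
  Real.sqrt_pos.2 (Finset.sum_pos (fun i _ => pow_pos (hd0 i) 2) ⟨⟨0, hs⟩, Finset.mem_univ _⟩)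

lemma deltaTot_mul_dtot {K N s : ℕ} (h0 : Fin s → Fin K → ℂ) (x0 : Fin s → Fin N → ℂ)
    {d0 : Fin s → ℝ} (hd0 : dtot d0 ≠ 0) (h : Fin s → Fin K → ℂ) (x : Fin s → Fin N → ℂ) :
    deltaTot h0 x0 d0 h x * dtot d0 = famFrob fun i => Hmap h x i - Hmap h0 x0 i :=
  div_mul_cancel₀ _ hd0

theorem statement6_general {K N L s : ℕ} (hs : 0 < s)
    (b : Fin L → Fin K → ℂ) (a : Fin s → Fin L → Fin N → ℂ)
    (h0 : Fin s → Fin K → ℂ) (x0 : Fin s → Fin N → ℂ)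
    (d0 : Fin s → ℝ) (hd0 : ∀ i, 0 < d0 i) (e : Fin L → ℂ) (ε : ℝ)
    (hAe : AadjNorm b a e ≤ ε * dtot d0 / (10 * √2 * s * kappa d0))
    (h : Fin s → Fin K → ℂ) (x : Fin s → Fin N → ℂ) {c C : ℝ}
    (hlow : c * famFrobSq (fun i => Hmap h x i - Hmap h0 x0 i)
      ≤ vnormSq (calA b a fun i => Hmap h x i - Hmap h0 x0 i))
    (hup : vnormSq (calA b a fun i => Hmap h x i - Hmap h0 x0 i)
      ≤ C * famFrobSq (fun i => Hmap h x i - Hmap h0 x0 i)) :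
    c * deltaTot h0 x0 d0 h x ^ 2 * dtot d0 ^ 2
        - ε * deltaTot h0 x0 d0 h x * dtot d0 ^ 2 / (5 * √s * kappa d0) + vnormSq e
      ≤ Fobj b a h0 x0 e h x
    ∧ Fobj b a h0 x0 e h x
      ≤ C * deltaTot h0 x0 d0 h x ^ 2 * dtot d0 ^ 2
        + ε * deltaTot h0 x0 d0 h x * dtot d0 ^ 2 / (5 * √s * kappa d0) + vnormSq e := by
  have hδ := deltaTot_mul_dtot h0 x0 (dtot_pos hs hd0).ne' h x
  have hδ_sq : famFrobSq (fun i => Hmap h x i - Hmap h0 x0 i)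
      = deltaTot h0 x0 d0 h x ^ 2 * dtot d0 ^ 2 := by
    rw [← mul_pow, hδ, famFrob_sq]
  have hsqrt : √(2 * s) / (√2 * s) = (√(s : ℝ))⁻¹ := by
    rw [Real.sqrt_mul zero_le_two, mul_div_mul_left _ _ (by positivity), Real.sqrt_div_self]
  have hnoise : 2 * (√(2 * s) * famFrob (fun i => Hmap h x i - Hmap h0 x0 i) * AadjNorm b a e)
      ≤ ε * deltaTot h0 x0 d0 h x * dtot d0 ^ 2 / (5 * √s * kappa d0) := calc
    _ ≤ 2 * (√(2 * s) * famFrob (fun i => Hmap h x i - Hmap h0 x0 i)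
          * (ε * dtot d0 / (10 * √2 * s * kappa d0))) := by
      have := famFrob_nonneg fun i => Hmap h x i - Hmap h0 x0 i
      gcongr
    _ = √(2 * s) / (√2 * s) * (ε * deltaTot h0 x0 d0 h x * dtot d0 ^ 2 / (5 * kappa d0)) := by
      rw [← hδ]
      ring
    _ = _ := by
      rw [hsqrt]
      ring
  obtain ⟨hlo, hhi⟩ := abs_le.1 ((abs_Fobj_sub_le b a h0 h x0 x e).trans hnoise)
  rw [hδ_sq] at hlow hup
  constructor <;> linarith

/-- two-sided bound on `F` over `𝒩_d ∩ 𝒩_μ ∩ 𝒩_ε`. -/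
theorem statement6
    {K N L s : ℕ} (hK : 0 < K) (hN : 0 < N) (hL : 0 < L) (hs : 0 < s)
    (b : Fin L → Fin K → ℂ) (hb : BtBeqI b)
    (a : Fin s → Fin L → Fin N → ℂ)
    (h0 : Fin s → Fin K → ℂ) (x0 : Fin s → Fin N → ℂ)
    (d0 : Fin s → ℝ) (hd0 : ∀ i, 0 < d0 i)
    (hh0 : ∀ i, vnorm (h0 i) = Real.sqrt (d0 i))
    (hx0 : ∀ i, vnorm (x0 i) = Real.sqrt (d0 i))
    (e : Fin L → ℂ) (μ ε : ℝ)
    (hμ : 0 < μ) (hε : 0 < ε) (hε15 : ε ≤ 1 / 15)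
    (hRIP : LocalRIP b a h0 x0 d0 μ ε)
    (hAe : AadjNorm b a e ≤ ε * dtot d0 / (10 * Real.sqrt 2 * (s : ℝ) * kappa d0)) :
    ∀ (h : Fin s → Fin K → ℂ) (x : Fin s → Fin N → ℂ),
      inNd d0 h x → inNmu b d0 μ h → inNeps h0 x0 d0 ε h x →
      2 / 3 * deltaTot h0 x0 d0 h x ^ 2 * dtot d0 ^ 2
          - ε * deltaTot h0 x0 d0 h x * dtot d0 ^ 2 / (5 * Real.sqrt s * kappa d0)
          + vnormSq e
        ≤ Fobj b a h0 x0 e h x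
      ∧ Fobj b a h0 x0 e h x
        ≤ 3 / 2 * deltaTot h0 x0 d0 h x ^ 2 * dtot d0 ^ 2
          + ε * deltaTot h0 x0 d0 h x * dtot d0 ^ 2 / (5 * Real.sqrt s * kappa d0)
          + vnormSq e :=
  fun h x hd hμh hεh => statement6_general hs b a h0 x0 d0 hd0 e ε hAe h x
    (hRIP h x hd hμh hεh).1 (hRIP h x hd hμh hεh).2

end RGD
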